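/- Let U ⊆ ℝ⁸ be open, let ρ_{mn} : U → ℝ be differentiable and Γ_{mnP} : U → ℝ be functions for internal indices m,n ∈ {4,…,8} and P ∈ {1,…,8}, and let G⁴⁴ = G⁵⁵ > 0 and G⁶⁶ = G⁷⁷ = G⁸⁸ > 0 be real constants with g := √((G⁴⁴)²+(G⁵⁵)²). Write Γ^m_{nP} := G^{mm}Γ_{mnP} (no sum) and define the internal covariant derivative ρ_{mn;P} := ∂_Pρ_{mn} − Σ_{h=4}^{8}(ρ_{hn}Γ^h_{mP} + ρ_{mh}Γ^h_{nP}). Assume: (a) Γ_{54P} = Γ_{45P} and Γ_{66P}+Γ_{77P}+Γ_{88P} = 0; (b) there exist real constants with Γ^6_{4P} = c⁶₅Γ^5_{4P}, Γ^7_{4P} = c⁷₅Γ^5_{4P}, Γ^8_{4P} = c⁸₅Γ^5_{4P}, Γ^6_{5P} = c⁶₄Γ^4_{5P}, Γ^7_{5P} = c⁷₄Γ^4_{5P}, Γ^8_{5P} = c⁸₄Γ^4_{5P}, and c⁶₅ = c⁶₄, c⁷₅ = c⁷₄, c⁸₅ = c⁸₄; (c) ρ₆₅ = ρ₆₄, ρ₇₅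 = ρ₇₄, ρ₈₅ = ρ₈₄, ρ₅₆ = ρ₄₆, ρ₅₇ = ρ₄₇, ρ₅₈ = ρ₄₈. Define l_L := (ρ₄₄+ρ₅₅)/√2, l_R := (ρ₄₄−ρ₅₅)/√2, ν_L := (ρ₅₄+ρ₄₅)/√2, ν_R := (ρ₅₄−ρ₄₅)/√2, with l_{L;P} := (ρ_{44;P}+ρ_{55;P})/√2, l_{R;P} := (ρ_{44;P}−ρ_{55;P})/√2, ν_{L;P} := (ρ_{54;P}+ρ_{45;P})/√2, ν_{R;P} := (ρ_{54;P}−ρ_{45;P})/√2; gauge potentials Z_P := (Γ_{44P}+Γ_{55P})/√2, A_P := (Γ_{44P}−Γ_{55P})/√2, W¹_P := (Γ_{45P}+Γ_{54P})/√2; and the mixed lepton fields l′_L := l_L + (1/(2√2))[c⁶₄(ρ₆₄+ρ₄₆) + c⁷₄(ρ₇₄+ρ₄₇) + c⁸₄(ρ₈₄+ρ₄₈) + c⁶₅(ρ₆₅+ρ₅₆) + c⁷₅(ρ₇₅+ρ₅₇) + c⁸₅(ρ₈₅+ρ₅₈)] and ν′_L := ν_L + (1/(2√2))[c⁶₅(ρ₆₄+ρ₄₆)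 + c⁷₅(ρ₇₄+ρ₄₇) + c⁸₅(ρ₈₄+ρ₄₈) + c⁶₄(ρ₆₅+ρ₅₆) + c⁷₄(ρ₇₅+ρ₅₇) + c⁸₄(ρ₈₅+ρ₅₈)]. Then on U, for all P: l_{L;P} = ∂_Pl_L − g·l_L·Z_P − g·l_R·A_P − g·ν′_L·W¹_P; l_{R;P} = ∂_Pl_R − g·l_R·Z_P − g·l_L·A_P; ν_{L;P} = ∂_Pν_L − g·ν_L·Z_P − g·l′_L·W¹_P; ν_{R;P} = ∂_Pν_R − g·ν_R·Z_P. -/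

import Mathlib

noncomputable section

/-- Partial derivative in the `P`-th coordinate direction of `ℝ⁸`. -/
def pd (P : Fin 8) (f : (Fin 8 → ℝ) → ℝ) (x : Fin 8 → ℝ) : ℝ :=
  fderiv ℝ f x (Pi.single P 1)

/-- Internal covariant derivative
`ρ_{mn;P} := ∂_P ρ_{mn} − Σ_h (ρ_{hn} Γ^h_{mP} + ρ_{mh} Γ^h_{nP})`, with
`Γ^h_{mP} := G^{hh} Γ_{hmP}` (no sum); internal index `i : Fin 5` corresponds
to the coordinate direction `4 + i` (so `0 ↦ 4, …, 4 ↦ 8`). -/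
def covD (Ginv : Fin 5 → ℝ) (Γ : Fin 5 → Fin 5 → Fin 8 → (Fin 8 → ℝ) → ℝ)
    (ρ : Fin 5 → Fin 5 → (Fin 8 → ℝ) → ℝ) (m n : Fin 5) (P : Fin 8)
    (x : Fin 8 → ℝ) : ℝ :=
  pd P (ρ m n) x
    - ∑ h : Fin 5, (ρ h n x * (Ginv h * Γ h m P x) + ρ m h x * (Ginv h * Γ h n P x))

/-!
The term `ωᵀρ + ρω` subtracted from `∂ρ` splits into a sum over the two lepton directions and a
sum over the quark directions. By the symmetry and first mixing conditions the entries of `ω` in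
quark row `q` and a lepton column are all `c_q w`, with `w = ω₀₁ = ω₁₀`, so the quark sum in the
lepton entry `(m, n)` is `w ∑_q c_q (ρ_{qn} + ρ_{mq})`. The two diagonal entries and the two
off-diagonal entries therefore have the same total quark contribution, which `ν′_L` and `l′_L`
absorb. The second mixing conditions make the quark sum independent of the lepton entry `(m, n)`,
so that it drops out of `l_R` and `ν_R`.
-/

section FDeriv

variable {𝕜 E : Type*} [NontriviallyNormedField 𝕜] [NormedAddCommGroup E] [NormedSpace 𝕜 E]
  {f a b : E → 𝕜} {x : E} {s : 𝕜}

lemma fderiv_apply_of_eq_add_div (hf : ∀ y, f y = (a y + b y) / s)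
    (ha : DifferentiableAt 𝕜 a x) (hb : DifferentiableAt 𝕜 b x) (v : E) :
    fderiv 𝕜 f x v = (fderiv 𝕜 a x v + fderiv 𝕜 b x v) / s := by
  have hderiv := (ha.hasFDerivAt.add hb.hasFDerivAt).mul_const s⁻¹
  have hfun : f = fun y ↦ (a + b) y * s⁻¹ := funext fun y ↦ by
    rw [hf, Pi.add_apply, div_eq_mul_inv]
  rw [hfun, hderiv.fderiv, smul_apply, add_apply, smul_eq_mul, div_eq_inv_mul]

lemma fderiv_apply_of_eq_sub_div (hf : ∀ y, f y = (a y - b y) / s)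
    (ha : DifferentiableAt 𝕜 a x) (hb : DifferentiableAt 𝕜 b x) (v : E) :
    fderiv 𝕜 f x v = (fderiv 𝕜 a x v - fderiv 𝕜 b x v) / s := by
  have hf_add : ∀ y, f y = (a y + (-b) y) / s := fun y ↦ by rw [hf, Pi.neg_apply, sub_eq_add_neg]
  rw [fderiv_apply_of_eq_add_div hf_add ha hb.neg, fderiv_neg, neg_apply, sub_eq_add_neg]

end FDeriv

section ConnectionTerm

open Matrix

variable {ι R : Type*} {n : ℕ}

/-- The infinitesimal action `ωᵀρ + ρω` of a connection matrix `ω` on a bilinear form `ρ`, which is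
what the covariant derivative of `ρ` subtracts from its partial derivative. The entry `ω h m` is
`Γ^h_{mP}`: the row is the upper index. -/
def connectionTerm [Fintype ι] [CommSemiring R] (ω ρ : Matrix ι ι R) : Matrix ι ι R :=
  ωᵀ * ρ + ρ * ω

lemma connectionTerm_apply [Fintype ι] [CommSemiring R] (ω ρ : Matrix ι ι R) (m k : ι) :
    connectionTerm ω ρ m k = ∑ h, (ρ h k * ω h m + ρ m h * ω h k) := by
  simp only [connectionTerm, Matrix.add_apply, mul_apply, transpose_apply, Finset.sum_add_distrib,
    mul_comm (ω _ m)]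

/-- The connection `Γ^h_m = G^{hh} Γ_{hm}` (no sum) with its first index raised by the diagonal
inverse metric `Ginv`. -/
def raisedConnection [Mul R] (Ginv : ι → R) (Γ : ι → ι → R) : Matrix ι ι R :=
  of fun h m ↦ Ginv h * Γ h m

lemma raisedConnection_apply [Mul R] (Ginv : ι → R) (Γ : ι → ι → R) (h m : ι) :
    raisedConnection Ginv Γ h m = Ginv h * Γ h m :=
  rfl

/-- The symmetry and first conditions of PMNS mixing, on a connection matrix with lepton directions
`0`, `1` and quark directions `q.succ.succ`: the lepton block is symmetric, and
the entries of quark row `q` are `c q` times the off-diagonal lepton entry in the same column. -/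
structure IsPMNSConnection [Mul R] (ω : Matrix (Fin (n + 2)) (Fin (n + 2)) R) (c : Fin n → R) :
    Prop where
  lepton_symm : ω 1 0 = ω 0 1
  quark_zero (q : Fin n) : ω q.succ.succ 0 = c q * ω 1 0
  quark_one (q : Fin n) : ω q.succ.succ 1 = c q * ω 0 1

lemma IsPMNSConnection.of_fin_three [Mul R] {ω : Matrix (Fin 5) (Fin 5) R} {c₀ c₁ c₂ : R}
    (hsymm : ω 1 0 = ω 0 1)
    (h₀₀ : ω 2 0 = c₀ * ω 1 0) (h₁₀ : ω 3 0 = c₁ * ω 1 0) (h₂₀ : ω 4 0 = c₂ * ω 1 0)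
    (h₀₁ : ω 2 1 = c₀ * ω 0 1) (h₁₁ : ω 3 1 = c₁ * ω 0 1) (h₂₁ : ω 4 1 = c₂ * ω 0 1) :
    IsPMNSConnection ω ![c₀, c₁, c₂] where
  lepton_symm := hsymm
  quark_zero := Fin.forall_fin_succ.2 ⟨h₀₀, Fin.forall_fin_two.2 ⟨h₁₀, h₂₀⟩⟩
  quark_one := Fin.forall_fin_succ.2 ⟨h₀₁, Fin.forall_fin_two.2 ⟨h₁₁, h₂₁⟩⟩

lemma IsPMNSConnection.quark_zero_eq [Mul R] {ω : Matrix (Fin (n + 2)) (Fin (n + 2)) R}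
    {c : Fin n → R} (hω : IsPMNSConnection ω c) (q : Fin n) : ω q.succ.succ 0 = c q * ω 0 1 := by
  rw [hω.quark_zero, hω.lepton_symm]

/-- The second conditions of PMNS mixing, on a charge with lepton directions `0`, `1` and quark
directions `q.succ.succ`: its quark–lepton entries do not distinguish the two lepton directions. -/
structure IsPMNSCharge (ρ : Matrix (Fin (n + 2)) (Fin (n + 2)) R) : Prop where
  row (q : Fin n) : ρ q.succ.succ 1 = ρ q.succ.succ 0
  col (q : Fin n) : ρ 1 q.succ.succ = ρ 0 q.succ.succ

lemma IsPMNSCharge.of_fin_three {ρ : Matrix (Fin 5) (Fin 5) R}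
    (hrow₀ : ρ 2 1 = ρ 2 0) (hrow₁ : ρ 3 1 = ρ 3 0) (hrow₂ : ρ 4 1 = ρ 4 0)
    (hcol₀ : ρ 1 2 = ρ 0 2) (hcol₁ : ρ 1 3 = ρ 0 3) (hcol₂ : ρ 1 4 = ρ 0 4) :
    IsPMNSCharge (n := 3) ρ where
  row := Fin.forall_fin_succ.2 ⟨hrow₀, Fin.forall_fin_two.2 ⟨hrow₁, hrow₂⟩⟩
  col := Fin.forall_fin_succ.2 ⟨hcol₀, Fin.forall_fin_two.2 ⟨hcol₁, hcol₂⟩⟩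

section CommSemiring

variable [CommSemiring R] {ω ρ : Matrix (Fin (n + 2)) (Fin (n + 2)) R} {c : Fin n → R}

lemma connectionTerm_apply_of_quark_eq_mul {w : R} {m k : Fin (n + 2)}
    (hm : ∀ q : Fin n, ω q.succ.succ m = c q * w) (hk : ∀ q : Fin n, ω q.succ.succ k = c q * w) :
    connectionTerm ω ρ m k = ρ 0 k * ω 0 m + ρ m 0 * ω 0 k + (ρ 1 k * ω 1 m + ρ m 1 * ω 1 k)
      + (∑ q : Fin n, c q * (ρ q.succ.succ k + ρ m q.succ.succ)) * w := by
  have hquark (q : Fin n) : ρ q.succ.succ k * ω q.succ.succ m + ρ m q.succ.succ * ω q.succ.succ k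
      = c q * (ρ q.succ.succ k + ρ m q.succ.succ) * w := by
    rw [hm, hk]; ring
  simp only [connectionTerm_apply, Fin.sum_univ_succ, Fin.succ_zero_eq_one, hquark,
    ← Finset.sum_mul, add_assoc]

/-- The combination of quark–lepton charges that is added, up to normalization, to `l_L` and to
`ν_L` to form the mixed fields `l′_L` and `ν′_L`. -/
def quarkMixing (c : Fin n → R) (ρ : Matrix (Fin (n + 2)) (Fin (n + 2)) R) : R :=
  ∑ q : Fin n, c q *
    (ρ q.succ.succ 0 + ρ 0 q.succ.succ + (ρ q.succ.succ 1 + ρ 1 q.succ.succ))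

lemma quarkMixing_fin_three (c₀ c₁ c₂ : R) (ρ : Matrix (Fin 5) (Fin 5) R) :
    quarkMixing ![c₀, c₁, c₂] ρ
      = c₀ * (ρ 2 0 + ρ 0 2) + c₁ * (ρ 3 0 + ρ 0 3) + c₂ * (ρ 4 0 + ρ 0 4)
        + c₀ * (ρ 2 1 + ρ 1 2) + c₁ * (ρ 3 1 + ρ 1 3) + c₂ * (ρ 4 1 + ρ 1 4) := by
  calc quarkMixing ![c₀, c₁, c₂] ρ
      = c₀ * (ρ 2 0 + ρ 0 2 + (ρ 2 1 + ρ 1 2)) + c₁ * (ρ 3 0 + ρ 0 3 + (ρ 3 1 + ρ 1 3))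
        + c₂ * (ρ 4 0 + ρ 0 4 + (ρ 4 1 + ρ 1 4)) := Fin.sum_univ_three _
    _ = _ := by ring

lemma IsPMNSConnection.connectionTerm_offDiag_add (hω : IsPMNSConnection ω c) :
    connectionTerm ω ρ 1 0 + connectionTerm ω ρ 0 1
      = (ρ 1 0 + ρ 0 1) * (ω 0 0 + ω 1 1)
        + (2 * (ρ 0 0 + ρ 1 1) + quarkMixing c ρ) * ω 0 1 := by
  rw [connectionTerm_apply_of_quark_eq_mul hω.quark_one hω.quark_zero_eq,
    connectionTerm_apply_of_quark_eq_mul hω.quark_zero_eq hω.quark_one, hω.lepton_symm, quarkMixing]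
  simp only [mul_add, Finset.sum_add_distrib]
  ring

end CommSemiring

namespace IsPMNSConnection

variable [CommRing R] {ω ρ : Matrix (Fin (n + 2)) (Fin (n + 2)) R} {c : Fin n → R}

lemma connectionTerm_diag_add (hω : IsPMNSConnection ω c) :
    connectionTerm ω ρ 0 0 + connectionTerm ω ρ 1 1
      = (ρ 0 0 + ρ 1 1) * (ω 0 0 + ω 1 1) + (ρ 0 0 - ρ 1 1) * (ω 0 0 - ω 1 1)
        + (2 * (ρ 1 0 + ρ 0 1) + quarkMixing c ρ) * ω 0 1 := by
  rw [connectionTerm_apply_of_quark_eq_mul hω.quark_zero_eq hω.quark_zero_eq,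
    connectionTerm_apply_of_quark_eq_mul hω.quark_one hω.quark_one, hω.lepton_symm, quarkMixing]
  simp only [mul_add, Finset.sum_add_distrib]
  ring

lemma connectionTerm_diag_sub (hω : IsPMNSConnection ω c) (hρ : IsPMNSCharge ρ) :
    connectionTerm ω ρ 0 0 - connectionTerm ω ρ 1 1
      = (ρ 0 0 - ρ 1 1) * (ω 0 0 + ω 1 1) + (ρ 0 0 + ρ 1 1) * (ω 0 0 - ω 1 1) := by
  rw [connectionTerm_apply_of_quark_eq_mul hω.quark_zero_eq hω.quark_zero_eq,
    connectionTerm_apply_of_quark_eq_mul hω.quark_one hω.quark_one, hω.lepton_symm]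
  simp only [hρ.row, hρ.col]
  ring

lemma connectionTerm_offDiag_sub (hω : IsPMNSConnection ω c) (hρ : IsPMNSCharge ρ) :
    connectionTerm ω ρ 1 0 - connectionTerm ω ρ 0 1
      = (ρ 1 0 - ρ 0 1) * (ω 0 0 + ω 1 1) := by
  rw [connectionTerm_apply_of_quark_eq_mul hω.quark_one hω.quark_zero_eq,
    connectionTerm_apply_of_quark_eq_mul hω.quark_zero_eq hω.quark_one, hω.lepton_symm]
  simp only [hρ.row, hρ.col]
  ring

end IsPMNSConnection

end ConnectionTerm

section CovariantDerivative

open Matrix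

variable {E : Type*} [NormedAddCommGroup E] [NormedSpace ℝ E]

/-- The covariant derivative of the charge `ρ` at `x` in the direction `v`, over any normed space
and any finite set of internal directions; `ω` is the value of the connection at `x` along `v`. -/
def covDerivAlong {ι : Type*} [Fintype ι] (ω : Matrix ι ι ℝ) (ρ : ι → ι → E → ℝ) (v x : E)
    (m k : ι) : ℝ :=
  fderiv ℝ (ρ m k) x v - connectionTerm ω (of fun i j ↦ ρ i j x) m k

lemma covD_eq_covDerivAlong (Ginv : Fin 5 → ℝ) (Γ : Fin 5 → Fin 5 → Fin 8 → (Fin 8 → ℝ) → ℝ)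
    (ρ : Fin 5 → Fin 5 → (Fin 8 → ℝ) → ℝ) (m k : Fin 5) (P : Fin 8) (x : Fin 8 → ℝ) :
    covD Ginv Γ ρ m k P x
      = covDerivAlong (raisedConnection Ginv fun i j ↦ Γ i j P x) ρ (Pi.single P 1) x m k := by
  simp only [covD, pd, covDerivAlong, connectionTerm_apply, raisedConnection_apply, of_apply]

lemma sqrt_sq_add_sq_self {G : ℝ} (hG : 0 ≤ G) : √(G ^ 2 + G ^ 2) = √2 * G := by
  rw [← two_mul, Real.sqrt_mul zero_le_two, Real.sqrt_sq hG]

lemma coupling_mul_div_sqrt_two (G a b : ℝ) :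
    √2 * G * (a / √2) * (b / √2) = a * (G * b) / √2 := by
  field_simp

theorem stmt_5_general {n : ℕ} {ρ : Fin (n + 2) → Fin (n + 2) → E → ℝ} {x : E}
    (hdiff : ∀ m k, DifferentiableAt ℝ (ρ m k) x) (v : E)
    {Ginv : Fin (n + 2) → ℝ} (hGinv : Ginv 0 = Ginv 1) (hnonneg : 0 ≤ Ginv 0)
    {g : ℝ} (hg : g = √(Ginv 0 ^ 2 + Ginv 1 ^ 2))
    {Γ : Fin (n + 2) → Fin (n + 2) → ℝ} {c : Fin n → ℝ}
    (hω : IsPMNSConnection (raisedConnection Ginv Γ) c) (hρ : IsPMNSCharge (of fun i j ↦ ρ i j x))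
    {lL lR νL νR : E → ℝ} {l'L ν'L Z A W1 : ℝ}
    (hlL : ∀ y, lL y = (ρ 0 0 y + ρ 1 1 y) / √2) (hlR : ∀ y, lR y = (ρ 0 0 y - ρ 1 1 y) / √2)
    (hνL : ∀ y, νL y = (ρ 1 0 y + ρ 0 1 y) / √2) (hνR : ∀ y, νR y = (ρ 1 0 y - ρ 0 1 y) / √2)
    (hl' : l'L = lL x + 1 / (2 * √2) * quarkMixing c (of fun i j ↦ ρ i j x))
    (hν' : ν'L = νL x + 1 / (2 * √2) * quarkMixing c (of fun i j ↦ ρ i j x))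
    (hZ : Z = (Γ 0 0 + Γ 1 1) / √2) (hA : A = (Γ 0 0 - Γ 1 1) / √2)
    (hW1 : W1 = (Γ 0 1 + Γ 1 0) / √2) :
    let D := covDerivAlong (raisedConnection Ginv Γ) ρ v x
    (D 0 0 + D 1 1) / √2
        = fderiv ℝ lL x v - g * lL x * Z - g * lR x * A - g * ν'L * W1 ∧
      (D 0 0 - D 1 1) / √2 = fderiv ℝ lR x v - g * lR x * Z - g * lL x * A ∧
      (D 1 0 + D 0 1) / √2 = fderiv ℝ νL x v - g * νL x * Z - g * l'L * W1 ∧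
      (D 1 0 - D 0 1) / √2 = fderiv ℝ νR x v - g * νR x * Z := by
  set ω := raisedConnection Ginv Γ with hω_def
  rw [← hGinv, sqrt_sq_add_sq_self hnonneg] at hg
  have hω₀₀ : ω 0 0 = Ginv 0 * Γ 0 0 := rfl
  have hω₁₁ : ω 1 1 = Ginv 0 * Γ 1 1 := by rw [hGinv]; rfl
  have hω₀₁ : 2 * ω 0 1 = Ginv 0 * (Γ 0 1 + Γ 1 0) := calc
    2 * ω 0 1 = ω 0 1 + ω 1 0 := by rw [hω.lepton_symm, two_mul]
    _ = Ginv 0 * (Γ 0 1 + Γ 1 0) := by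
      rw [hω_def, raisedConnection_apply, raisedConnection_apply, ← hGinv, mul_add]
  have coupling_Z (a : ℝ) : g * (a / √2) * Z = a * (ω 0 0 + ω 1 1) / √2 := by
    rw [hg, hZ, coupling_mul_div_sqrt_two, mul_add, hω₀₀, hω₁₁]
  have coupling_A (a : ℝ) : g * (a / √2) * A = a * (ω 0 0 - ω 1 1) / √2 := by
    rw [hg, hA, coupling_mul_div_sqrt_two, mul_sub, hω₀₀, hω₁₁]
  have coupling_W1 (a : ℝ) : g * (a / √2) * W1 = a * (2 * ω 0 1) / √2 := by
    rw [hg, hW1, coupling_mul_div_sqrt_two, hω₀₁]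
  have hl'_div : l'L = (ρ 0 0 x + ρ 1 1 x + quarkMixing c (of fun i j ↦ ρ i j x) / 2) / √2 := by
    rw [hl', hlL]; ring
  have hν'_div : ν'L = (ρ 1 0 x + ρ 0 1 x + quarkMixing c (of fun i j ↦ ρ i j x) / 2) / √2 := by
    rw [hν', hνL]; ring
  have hdiag_add := hω.connectionTerm_diag_add (ρ := of fun i j ↦ ρ i j x)
  have hdiag_sub := hω.connectionTerm_diag_sub hρ
  have hoffDiag_add := hω.connectionTerm_offDiag_add (ρ := of fun i j ↦ ρ i j x)
  have hoffDiag_sub := hω.connectionTerm_offDiag_sub hρ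
  simp only [of_apply] at hdiag_add hdiag_sub hoffDiag_add hoffDiag_sub
  rw [fderiv_apply_of_eq_add_div hlL (hdiff 0 0) (hdiff 1 1),
    fderiv_apply_of_eq_sub_div hlR (hdiff 0 0) (hdiff 1 1),
    fderiv_apply_of_eq_add_div hνL (hdiff 1 0) (hdiff 0 1),
    fderiv_apply_of_eq_sub_div hνR (hdiff 1 0) (hdiff 0 1)]
  simp only [hlL, hlR, hνL, hνR, hl'_div, hν'_div, coupling_Z, coupling_A, coupling_W1,
    covDerivAlong]
  refine ⟨?_, ?_, ?_, ?_⟩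
  · linear_combination -(1 / √2) * hdiag_add
  · linear_combination -(1 / √2) * hdiag_sub
  · linear_combination -(1 / √2) * hoffDiag_add
  · linear_combination -(1 / √2) * hoffDiag_sub

end CovariantDerivative

/-- **PMNS mixing in the affine connection representation** (𝔇 = 8,
internal indices `0,…,4 ↦ 4,…,8`): under the basic symmetry conditions (a)
and the first (b) and second (c) conditions of PMNS mixing, the lepton fields
satisfy the stated evolution equations with the mixed fields `l′_L`, `ν′_L`. -/
theorem stmt_5
    (U : Set (Fin 8 → ℝ)) (hU : IsOpen U)
    (ρ : Fin 5 → Fin 5 → (Fin 8 → ℝ) → ℝ)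
    (hρ : ∀ m n, ∀ x ∈ U, DifferentiableAt ℝ (ρ m n) x)
    (Γ : Fin 5 → Fin 5 → Fin 8 → (Fin 8 → ℝ) → ℝ)
    (G4 G5 G6 G7 G8 : ℝ) (hG45 : G4 = G5) (hG67 : G6 = G7) (hG78 : G7 = G8)
    (hG4pos : 0 < G4) (hG6pos : 0 < G6)
    (g : ℝ) (hg : g = Real.sqrt (G4 ^ 2 + G5 ^ 2))
    (Ginv : Fin 5 → ℝ) (hGinv : Ginv = ![G4, G5, G6, G7, G8])
    -- (a) basic symmetry conditions
    (ha1 : ∀ P : Fin 8, ∀ x ∈ U, Γ 1 0 P x = Γ 0 1 P x)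
    (ha2 : ∀ P : Fin 8, ∀ x ∈ U, Γ 2 2 P x + Γ 3 3 P x + Γ 4 4 P x = 0)
    -- (b) first conditions of PMNS mixing (Γ^m_{nP} := G^{mm} Γ_{mnP})
    (c64 c74 c84 c65 c75 c85 : ℝ)
    (hb1 : ∀ P : Fin 8, ∀ x ∈ U, Ginv 2 * Γ 2 0 P x = c65 * (Ginv 1 * Γ 1 0 P x))
    (hb2 : ∀ P : Fin 8, ∀ x ∈ U, Ginv 3 * Γ 3 0 P x = c75 * (Ginv 1 * Γ 1 0 P x))
    (hb3 : ∀ P : Fin 8, ∀ x ∈ U, Ginv 4 * Γ 4 0 P x = c85 * (Ginv 1 * Γ 1 0 P x))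
    (hb4 : ∀ P : Fin 8, ∀ x ∈ U, Ginv 2 * Γ 2 1 P x = c64 * (Ginv 0 * Γ 0 1 P x))
    (hb5 : ∀ P : Fin 8, ∀ x ∈ U, Ginv 3 * Γ 3 1 P x = c74 * (Ginv 0 * Γ 0 1 P x))
    (hb6 : ∀ P : Fin 8, ∀ x ∈ U, Ginv 4 * Γ 4 1 P x = c84 * (Ginv 0 * Γ 0 1 P x))
    (hc64 : c65 = c64) (hc74 : c75 = c74) (hc84 : c85 = c84)
    -- (c) second conditions of PMNS mixing
    (hr1 : ∀ x, ρ 2 1 x = ρ 2 0 x) (hr2 : ∀ x, ρ 3 1 x = ρ 3 0 x)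
    (hr3 : ∀ x, ρ 4 1 x = ρ 4 0 x)
    (hr4 : ∀ x, ρ 1 2 x = ρ 0 2 x) (hr5 : ∀ x, ρ 1 3 x = ρ 0 3 x)
    (hr6 : ∀ x, ρ 1 4 x = ρ 0 4 x)
    -- lepton fields
    (lL lR νL νR l'L ν'L : (Fin 8 → ℝ) → ℝ)
    (hlL : ∀ x, lL x = (ρ 0 0 x + ρ 1 1 x) / Real.sqrt 2)
    (hlR : ∀ x, lR x = (ρ 0 0 x - ρ 1 1 x) / Real.sqrt 2)
    (hνL : ∀ x, νL x = (ρ 1 0 x + ρ 0 1 x) / Real.sqrt 2)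
    (hνR : ∀ x, νR x = (ρ 1 0 x - ρ 0 1 x) / Real.sqrt 2)
    (hl' : ∀ x, l'L x = lL x + (1 / (2 * Real.sqrt 2)) *
      (c64 * (ρ 2 0 x + ρ 0 2 x) + c74 * (ρ 3 0 x + ρ 0 3 x)
        + c84 * (ρ 4 0 x + ρ 0 4 x) + c65 * (ρ 2 1 x + ρ 1 2 x)
        + c75 * (ρ 3 1 x + ρ 1 3 x) + c85 * (ρ 4 1 x + ρ 1 4 x)))
    (hν' : ∀ x, ν'L x = νL x + (1 / (2 * Real.sqrt 2)) *
      (c65 * (ρ 2 0 x + ρ 0 2 x) + c75 * (ρ 3 0 x + ρ 0 3 x)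
        + c85 * (ρ 4 0 x + ρ 0 4 x) + c64 * (ρ 2 1 x + ρ 1 2 x)
        + c74 * (ρ 3 1 x + ρ 1 3 x) + c84 * (ρ 4 1 x + ρ 1 4 x)))
    -- gauge potentials
    (Z A W1 : Fin 8 → (Fin 8 → ℝ) → ℝ)
    (hZ : ∀ P x, Z P x = (Γ 0 0 P x + Γ 1 1 P x) / Real.sqrt 2)
    (hA : ∀ P x, A P x = (Γ 0 0 P x - Γ 1 1 P x) / Real.sqrt 2)
    (hW1 : ∀ P x, W1 P x = (Γ 0 1 P x + Γ 1 0 P x) / Real.sqrt 2) :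
    ∀ x ∈ U, ∀ P : Fin 8,
      (covD Ginv Γ ρ 0 0 P x + covD Ginv Γ ρ 1 1 P x) / Real.sqrt 2
          = pd P lL x - g * lL x * Z P x - g * lR x * A P x - g * ν'L x * W1 P x ∧
      (covD Ginv Γ ρ 0 0 P x - covD Ginv Γ ρ 1 1 P x) / Real.sqrt 2
          = pd P lR x - g * lR x * Z P x - g * lL x * A P x ∧
      (covD Ginv Γ ρ 1 0 P x + covD Ginv Γ ρ 0 1 P x) / Real.sqrt 2
          = pd P νL x - g * νL x * Z P x - g * l'L x * W1 P x ∧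
      (covD Ginv Γ ρ 1 0 P x - covD Ginv Γ ρ 0 1 P x) / Real.sqrt 2
          = pd P νR x - g * νR x * Z P x := by
  intro x hx P
  subst hG45 hc64 hc74 hc84 hGinv
  have hω := IsPMNSConnection.of_fin_three
    (ω := raisedConnection ![G4, G4, G6, G7, G8] fun i j ↦ Γ i j P x)
    (congrArg (G4 * ·) (ha1 P x hx)) (hb1 P x hx) (hb2 P x hx) (hb3 P x hx)
    (hb4 P x hx) (hb5 P x hx) (hb6 P x hx)
  simp only [covD_eq_covDerivAlong]
  exact stmt_5_general (fun m k ↦ hρ m k x hx) _ rfl hG4pos.le hg hω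
    (.of_fin_three (hr1 x) (hr2 x) (hr3 x) (hr4 x) (hr5 x) (hr6 x)) hlL hlR hνL hνR
    (by rw [hl', quarkMixing_fin_three]; rfl) (by rw [hν', quarkMixing_fin_three]; rfl)
    (hZ P x) (hA P x) (hW1 P x)

end
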